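/- There exist constants δ₀ > 0, C > 0 and c₀ > 0 (depending only on γ, a and a fixed base state) such that the following holds. Let U^{S₁} be an s₁-relaxation shock profile connecting U* (at −∞) and U₊ (at +∞) whose speed s₁ satisfies the Lax condition λ₁(v₊) < s₁ < λ₁(v*) < 0 and the sub-characteristic condition √(−p′(v)) < a on the interval between v* and v₊, normalized so that its first component satisfies V^{S₁}(0) = (v* + v₊)/2, and suppose the wave strength δ₁ = |U₊ − U*| satisfies δ₁ ≤ δ₀. Then |U^{S₁}(ξ) − U*| ≤ C δ₁ e^{−c₀ δ₁ |ξ|} for all ξ ≤ 0, and |U^{S₁}(ξ) − U₊| ≤ C δ₁ e^{−c₀ δ₁ |ξ|} for all ξ ≥ 0. -/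

import Mathlib

open Real Filter Topology

noncomputable def pP (γ v : ℝ) : ℝ := v ^ (-γ)
noncomputable def Fl (γ : ℝ) (U : ℝ × ℝ) : ℝ × ℝ := (-U.2, pP γ U.1)
noncomputable def lam1 (γ v : ℝ) : ℝ := -Real.sqrt (γ * v ^ (-γ - 1))

def IsProfile (γ a s : ℝ) (Ul Ur : ℝ × ℝ) (U : ℝ → ℝ × ℝ) : Prop :=
  ContDiff ℝ 2 U ∧ (∀ ξ, 0 < (U ξ).1) ∧ Bornology.IsBounded (Set.range U) ∧
  (∀ ξ, (a ^ 2 - s ^ 2) • deriv (deriv U) ξ = (-s) • deriv U ξ + deriv (Fl γ ∘ U) ξ) ∧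
  Tendsto U atBot (𝓝 Ul) ∧ Tendsto U atTop (𝓝 Ur) ∧
  Tendsto (deriv U) atBot (𝓝 0) ∧ Tendsto (deriv U) atTop (𝓝 0)

/-!
Integrating the profile equation once turns it into the scalar equation `V'' = 2ρV' - f(V)`, where
`f` is strongly convex and vanishes at both end states. Since the pressure is decreasing,
`f' ≤ ρ²`, so the equation is overdamped: an orbit cannot cross an equilibrium and return, which
confines `V` between the end states. Writing `w = -V'`, comparison functions of the form
`q' ≤ ω q` with `q` convergent at `+∞` (hence `0 ≤ q`) squeeze `w` between `κ |f(V)|` and multiples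
of the distances to the end states. The lower bound is a logistic inequality, which gives decay of
`V` at a rate proportional to the strength; the upper bounds transfer the decay to the velocity.
-/

section Comparison

variable {q q' : ℝ → ℝ} {ω L : ℝ}

theorem le_mul_exp_of_hasDerivAt_le {t₀ t : ℝ} (hq : ∀ t, HasDerivAt q (q' t) t)
    (hle : ∀ t, t₀ ≤ t → q' t ≤ ω * q t) (ht : t₀ ≤ t) :
    q t ≤ q t₀ * exp (ω * (t - t₀)) := by
  have hgronwall := le_gronwallBound_of_liminf_deriv_right_le (f := q) (f' := q') (ε := 0)
    (fun x _ ↦ (hq x).continuousAt.continuousWithinAt)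
    (fun x _ _ hr ↦ (hq x).hasDerivWithinAt.liminf_right_slope_le hr)
    le_rfl (fun x hx ↦ by simpa only [add_zero] using hle x hx.1) t ⟨ht, le_rfl⟩
  rwa [gronwallBound_ε0] at hgronwall

theorem nonneg_of_hasDerivAt_le_of_tendsto (hω : 0 < ω) (hq : ∀ t, HasDerivAt q (q' t) t)
    (hle : ∀ t, q' t ≤ ω * q t) (hlim : Tendsto q atTop (𝓝 L)) (t₀ : ℝ) : 0 ≤ q t₀ := by
  by_contra! hneg
  have hexp : Tendsto (fun t ↦ exp (ω * (t - t₀))) atTop atTop :=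
    tendsto_exp_atTop.comp ((tendsto_atTop_add_const_right _ (-t₀) tendsto_id).const_mul_atTop hω)
  refine not_tendsto_nhds_of_tendsto_atBot
    (tendsto_atBot_mono' _ ?_ (hexp.const_mul_atTop_of_neg hneg)) L hlim
  filter_upwards [eventually_ge_atTop t₀] with t ht
  exact le_mul_exp_of_hasDerivAt_le hq (fun t _ ↦ hle t) ht

theorem eq_zero_of_overdamped {y y' y'' : ℝ → ℝ} {ρ t₀ t : ℝ} (hρ : 0 < ρ)
    (hy : ∀ t, HasDerivAt y (y' t) t) (hy' : ∀ t, HasDerivAt y' (y'' t) t)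
    (hod : ∀ t, 0 ≤ y t * (y'' t - 2 * ρ * y' t + ρ ^ 2 * y t))
    (hlim : Tendsto y atTop (𝓝 L)) (hlim' : Tendsto y' atTop (𝓝 0))
    (h₀ : y t₀ = 0) (ht : t₀ ≤ t) : y t = 0 := by
  -- The defect `2ρy² - (y²)'` is a nonnegative comparison function because
  -- `(e^{-ρt} y)²` is convex.
  have hdefect : ∀ t, 0 ≤ 2 * (y t * (ρ * y t - y' t)) := by
    refine nonneg_of_hasDerivAt_le_of_tendsto (mul_pos two_pos hρ)
      (fun t ↦ ((hy t).mul (((hy t).const_mul ρ).sub (hy' t))).const_mul 2) (fun t ↦ ?_)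
      ((hlim.mul ((hlim.const_mul ρ).sub hlim')).const_mul 2)
    simp only [Pi.sub_apply]
    nlinarith [hod t, sq_nonneg (y' t - ρ * y t)]
  have hsq : ∀ t, HasDerivAt (fun t ↦ y t ^ 2) (2 * (y t * y' t)) t := fun t ↦
    ((hy t).pow 2).congr_deriv (by ring)
  have hdecay := le_mul_exp_of_hasDerivAt_le (ω := 2 * ρ) hsq
    (fun t _ ↦ by linarith [hdefect t]) ht
  rw [h₀, zero_pow two_ne_zero, zero_mul] at hdecay
  exact pow_eq_zero_iff two_ne_zero |>.1 (le_antisymm hdecay (sq_nonneg _))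

end Comparison

section Logistic

variable {V V' : ℝ → ℝ} {vl vr k : ℝ}

theorem sub_le_mul_exp_of_logistic (hV : ∀ ξ, HasDerivAt V (V' ξ) ξ)
    (hmem : ∀ ξ, V ξ ∈ Set.Icc vr vl) (hk : 0 ≤ k)
    (hV' : ∀ ξ, V' ξ ≤ -(k * ((vl - V ξ) * (V ξ - vr)))) {ξ : ℝ} (hξ : 0 ≤ ξ) :
    V ξ - vr ≤ (V 0 - vr) * exp (-(k * (vl - V 0) * ξ)) := by
  have hl : ∀ t, 0 ≤ vl - V t := fun t ↦ sub_nonneg.2 (hmem t).2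
  have hr : ∀ t, 0 ≤ V t - vr := fun t ↦ sub_nonneg.2 (hmem t).1
  have hanti : Antitone V := antitone_of_hasDerivAt_nonpos hV fun t ↦
    (hV' t).trans (neg_nonpos.2 (mul_nonneg hk (mul_nonneg (hl t) (hr t))))
  have hrate : ∀ t, 0 ≤ t → V' t ≤ -(k * (vl - V 0)) * (V t - vr) := fun t ht ↦ calc
    V' t ≤ -(k * ((vl - V t) * (V t - vr))) := hV' t
    _ ≤ -(k * ((vl - V 0) * (V t - vr))) := by gcongr; exacts [hr t, hanti ht]
    _ = -(k * (vl - V 0)) * (V t - vr) := by ring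
  simpa using le_mul_exp_of_hasDerivAt_le (fun t ↦ (hV t).sub_const vr) hrate hξ

theorem sub_le_mul_exp_of_logistic_of_nonpos (hV : ∀ ξ, HasDerivAt V (V' ξ) ξ)
    (hmem : ∀ ξ, V ξ ∈ Set.Icc vr vl) (hk : 0 ≤ k)
    (hV' : ∀ ξ, V' ξ ≤ -(k * ((vl - V ξ) * (V ξ - vr)))) {ξ : ℝ} (hξ : ξ ≤ 0) :
    vl - V ξ ≤ (vl - V 0) * exp (k * (V 0 - vr) * ξ) := by
  -- The point reflection `ξ ↦ -V (-ξ)` exchanges the two end states.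
  have hreflect : ∀ t, HasDerivAt (fun t ↦ -V (-t)) (V' (-t)) t := fun t ↦
    ((hV (-t)).scomp t (hasDerivAt_neg t)).neg.congr_deriv (by simp)
  have hdecay := sub_le_mul_exp_of_logistic (vl := -vr) (vr := -vl) hreflect
    (fun t ↦ ⟨neg_le_neg (hmem (-t)).2, neg_le_neg (hmem (-t)).1⟩) hk
    (fun t ↦ (hV' (-t)).trans_eq (by ring)) (neg_nonneg.2 hξ)
  simpa only [neg_neg, neg_zero, neg_sub_neg, mul_neg] using hdecay

end Logistic

theorem strongConvexOn_of_le_hasDerivAt2 {s : Set ℝ} {f f' f'' : ℝ → ℝ} {m : ℝ}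
    (hs : Convex ℝ s) (hf : ∀ x ∈ s, HasDerivAt f (f' x) x)
    (hf' : ∀ x ∈ s, HasDerivAt f' (f'' x) x) (hm : ∀ x ∈ s, m ≤ f'' x) :
    StrongConvexOn s m f := by
  rw [strongConvexOn_iff_convex]
  simp only [norm_eq_abs, sq_abs]
  have hd : ∀ x ∈ s, HasDerivAt (fun x ↦ f x - m / 2 * x ^ 2) (f' x - m * x) x := fun x hx ↦
    ((hf x hx).sub ((hasDerivAt_pow 2 x).const_mul (m / 2))).congr_deriv (by simp; ring)
  have hd' : ∀ x ∈ s, HasDerivAt (fun x ↦ f' x - m * x) (f'' x - m) x := fun x hx ↦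
    ((hf' x hx).sub ((hasDerivAt_id x).const_mul m)).congr_deriv (by ring)
  exact convexOn_of_hasDerivWithinAt2_nonneg hs
    (fun x hx ↦ (hd x hx).continuousAt.continuousWithinAt)
    (fun x hx ↦ (hd x (interior_subset hx)).hasDerivWithinAt)
    (fun x hx ↦ (hd' x (interior_subset hx)).hasDerivWithinAt)
    (fun x hx ↦ sub_nonneg.2 (hm x (interior_subset hx)))

theorem le_neg_mul_of_strongConvexOn_of_eq_zero {f : ℝ → ℝ} {u v x m : ℝ} (huv : u < v)
    (hf : StrongConvexOn (Set.Icc u v) m f) (hu : f u = 0) (hv : f v = 0)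
    (hx : x ∈ Set.Icc u v) : f x ≤ -(m / 2 * ((v - x) * (x - u))) := by
  have hd : 0 < v - u := sub_pos.2 huv
  have hchord := hf.2 (Set.left_mem_Icc.2 huv.le) (Set.right_mem_Icc.2 huv.le)
    (div_nonneg (sub_nonneg.2 hx.2) hd.le) (div_nonneg (sub_nonneg.2 hx.1) hd.le)
    (by field_simp; ring)
  have hcomb : ((v - x) / (v - u)) • u + ((x - u) / (v - u)) • v = x := by
    simp only [smul_eq_mul]; field_simp; ring
  simp only [hcomb, hu, hv, norm_eq_abs, sq_abs, smul_zero] at hchord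
  refine hchord.trans_eq ?_
  field_simp
  ring

/-- A heteroclinic orbit `V` of the scalar equation `V'' = 2ρV' - f(V)`, running from `vl` at `-∞`
to `vr` at `+∞`, in first-order form with the sign convention `w = -V'`. Only the behaviour of
`w` at `+∞` is recorded, since all comparison arguments run from there. -/
structure IsConnectingOrbit (ρ : ℝ) (f : ℝ → ℝ) (vl vr : ℝ) (V w : ℝ → ℝ) : Prop where
  hasDerivAt : ∀ ξ, HasDerivAt V (-w ξ) ξ
  hasDerivAt_speed : ∀ ξ, HasDerivAt w (2 * ρ * w ξ + f (V ξ)) ξ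
  tendsto_atBot : Tendsto V atBot (𝓝 vl)
  tendsto_atTop : Tendsto V atTop (𝓝 vr)
  tendsto_speed_atTop : Tendsto w atTop (𝓝 0)

namespace IsConnectingOrbit

variable {ρ vl vr L κ : ℝ} {f f' V w : ℝ → ℝ} {S : Set ℝ}

theorem continuous (h : IsConnectingOrbit ρ f vl vr V w) : Continuous V :=
  continuous_iff_continuousAt.2 fun ξ ↦ (h.hasDerivAt ξ).continuousAt

theorem eq_equilibrium_of_le (h : IsConnectingOrbit ρ f vl vr V w) (hρ : 0 < ρ)
    (hanti : AntitoneOn (fun v ↦ f v - ρ ^ 2 * v) S) (hS : ∀ ξ, V ξ ∈ S)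
    {e ξ₀ ξ : ℝ} (he : e ∈ S) (hfe : f e = 0) (h₀ : V ξ₀ = e) (hξ : ξ₀ ≤ ξ) : V ξ = e := by
  refine sub_eq_zero.1 (eq_zero_of_overdamped (y := fun t ↦ V t - e) hρ
    (fun t ↦ (h.hasDerivAt t).sub_const e) (fun t ↦ (h.hasDerivAt_speed t).neg) (fun t ↦ ?_)
    (h.tendsto_atTop.sub_const e) (by simpa using h.tendsto_speed_atTop.neg)
    (sub_eq_zero.2 h₀) hξ)
  rcases le_total (V t) e with hle | hle
  · have := hanti (hS t) he hle
    exact mul_nonneg_of_nonpos_of_nonpos (sub_nonpos.2 hle) (by linarith)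
  · have := hanti he (hS t) hle
    exact mul_nonneg (sub_nonneg.2 hle) (by linarith)

theorem mem_Icc (h : IsConnectingOrbit ρ f vl vr V w) (hρ : 0 < ρ) (hlt : vr < vl)
    (hanti : AntitoneOn (fun v ↦ f v - ρ ^ 2 * v) S) (hS : ∀ ξ, V ξ ∈ S)
    (hvl : vl ∈ S) (hvr : vr ∈ S) (hfl : f vl = 0) (hfr : f vr = 0) (ξ : ℝ) :
    V ξ ∈ Set.Icc vr vl := by
  constructor <;> by_contra! hout
  · obtain ⟨η, hηξ, hη⟩ := ((eventually_le_atBot ξ).and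
      (h.tendsto_atBot.eventually_const_lt hlt)).exists
    obtain ⟨ξ₀, hξ₀, heq⟩ := intermediate_value_Icc' hηξ h.continuous.continuousOn
      ⟨hout.le, hη.le⟩
    exact hout.ne (h.eq_equilibrium_of_le hρ hanti hS hvr hfr heq hξ₀.2)
  · obtain ⟨η, hξη, hη⟩ := ((eventually_ge_atTop ξ).and
      (h.tendsto_atTop.eventually_lt_const hlt)).exists
    obtain ⟨ξ₀, hξ₀, heq⟩ := intermediate_value_Icc' hξη h.continuous.continuousOn
      ⟨hη.le, hout.le⟩
    exact hη.ne (h.eq_equilibrium_of_le hρ hanti hS hvl hfl heq hξ₀.2)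

theorem speed_nonneg (h : IsConnectingOrbit ρ f vl vr V w) (hρ : 0 < ρ)
    (hf : ∀ ξ, f (V ξ) ≤ 0) (ξ : ℝ) : 0 ≤ w ξ :=
  nonneg_of_hasDerivAt_le_of_tendsto (mul_pos two_pos hρ) h.hasDerivAt_speed
    (fun t ↦ by linarith [hf t]) h.tendsto_speed_atTop ξ

theorem speed_le_mul_sub_left (h : IsConnectingOrbit ρ f vl vr V w) (hρ : 0 < ρ)
    (hf : ∀ ξ, -(ρ ^ 2 * (vl - V ξ)) ≤ f (V ξ)) (ξ : ℝ) : w ξ ≤ ρ * (vl - V ξ) := by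
  refine sub_nonneg.1 (nonneg_of_hasDerivAt_le_of_tendsto (q := fun t ↦ ρ * (vl - V t) - w t) hρ
    (fun t ↦ (((h.hasDerivAt t).const_sub vl).const_mul ρ).sub (h.hasDerivAt_speed t))
    (fun t ↦ ?_) (((h.tendsto_atTop.const_sub vl).const_mul ρ).sub h.tendsto_speed_atTop) ξ)
  linarith [hf t]

theorem speed_le_mul_sub_right (h : IsConnectingOrbit ρ f vl vr V w) (hρ : 0 ≤ ρ) (hL : 0 < L)
    (hw : ∀ ξ, 0 ≤ w ξ) (hf : ∀ ξ, -(L ^ 2 * (V ξ - vr)) ≤ f (V ξ)) (ξ : ℝ) :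
    w ξ ≤ L * (V ξ - vr) := by
  refine sub_nonneg.1 (nonneg_of_hasDerivAt_le_of_tendsto (q := fun t ↦ L * (V t - vr) - w t) hL
    (fun t ↦ (((h.hasDerivAt t).sub_const vr).const_mul L).sub (h.hasDerivAt_speed t))
    (fun t ↦ ?_) (((h.tendsto_atTop.sub_const vr).const_mul L).sub h.tendsto_speed_atTop) ξ)
  linarith [hf t, mul_nonneg hρ (hw t)]

theorem mul_neg_le_speed (h : IsConnectingOrbit ρ f vl vr V w) (hρ : 0 < ρ) (hκ : 0 ≤ κ)
    (hκL : κ * (2 * ρ + κ * L ^ 2) ≤ 1) (hw : ∀ ξ, 0 ≤ w ξ) (hfV : ∀ ξ, f (V ξ) ≤ 0)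
    (hf : ∀ ξ, HasDerivAt f (f' (V ξ)) (V ξ)) (hf' : ∀ ξ, -L ^ 2 ≤ f' (V ξ))
    (hfr : ContinuousAt f vr) (ξ : ℝ) : κ * -f (V ξ) ≤ w ξ := by
  have hfV' : ∀ t, HasDerivAt (fun t ↦ f (V t)) (f' (V t) * -w t) t := fun t ↦
    (hf t).comp t (h.hasDerivAt t)
  suffices hsum : 0 ≤ w ξ + κ * f (V ξ) by linarith
  refine nonneg_of_hasDerivAt_le_of_tendsto (q := fun t ↦ w t + κ * f (V t))
    (ω := 2 * ρ + κ * L ^ 2) (by positivity)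
    (fun t ↦ (h.hasDerivAt_speed t).add ((hfV' t).const_mul κ)) (fun t ↦ ?_)
    (h.tendsto_speed_atTop.add ((hfr.tendsto.comp h.tendsto_atTop).const_mul κ)) ξ
  have hslope : κ * (f' (V t) * -w t) ≤ κ * (L ^ 2 * w t) :=
    mul_le_mul_of_nonneg_left (by linarith [mul_le_mul_of_nonneg_right (hf' t) (hw t)]) hκ
  have habsorb : f (V t) ≤ κ * (2 * ρ + κ * L ^ 2) * f (V t) := by
    linarith [mul_le_mul_of_nonpos_right hκL (hfV t)]
  linarith

end IsConnectingOrbit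

section Characteristics

variable {γ v : ℝ}

theorem hasDerivAt_pP (hv : 0 < v) : HasDerivAt (pP γ) (-γ * v ^ (-γ - 1)) v :=
  hasDerivAt_rpow_const (Or.inl hv.ne')

theorem antitoneOn_pP (hγ : 0 ≤ γ) : AntitoneOn (pP γ) (Set.Ioi 0) := fun _ hu _ _ huv ↦
  rpow_le_rpow_of_nonpos hu huv (neg_nonpos.2 hγ)

theorem differentiableAt_Fl {U : ℝ × ℝ} (hU : 0 < U.1) : DifferentiableAt ℝ (Fl γ) U :=
  differentiableAt_snd.neg.prodMk
    ((hasDerivAt_pP hU).differentiableAt.comp U differentiableAt_fst)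

theorem lam1_neg (hγ : 0 < γ) (hv : 0 < v) : lam1 γ v < 0 :=
  neg_neg_of_pos (sqrt_pos.2 (by positivity))

theorem lam1_sq (hγ : 0 ≤ γ) (hv : 0 ≤ v) : lam1 γ v ^ 2 = γ * v ^ (-γ - 1) := by
  rw [lam1, neg_sq, sq_sqrt (by positivity)]

theorem monotoneOn_lam1 (hγ : 0 ≤ γ) : MonotoneOn (lam1 γ) (Set.Ioi 0) := fun u hu v _ huv ↦
  neg_le_neg (sqrt_le_sqrt (mul_le_mul_of_nonneg_left
    (rpow_le_rpow_of_nonpos hu huv (by linarith)) hγ))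

end Characteristics

/-- The nonlinearity `f` of the scalar profile equation `V'' = 2ρV' - f(V)` with `ρ = -s/A` and
`A = a² - s²`: the scaled defect of the Rankine–Hugoniot relation between `vl` and `v`. -/
noncomputable def profileReaction (γ A s vl v : ℝ) : ℝ :=
  (s ^ 2 * (v - vl) + pP γ v - pP γ vl) / A ^ 2

section ProfileReaction

variable {γ A s vl u v : ℝ}

theorem profileReaction_self : profileReaction γ A s vl vl = 0 := by simp [profileReaction]

theorem hasDerivAt_profileReaction (hv : 0 < v) :
    HasDerivAt (profileReaction γ A s vl) ((s ^ 2 - γ * v ^ (-γ - 1)) / A ^ 2) v :=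
  (((((hasDerivAt_id v).sub_const vl).const_mul (s ^ 2)).add
    (hasDerivAt_pP hv)).sub_const (pP γ vl)).div_const (A ^ 2) |>.congr_deriv (by ring)

theorem antitoneOn_profileReaction_sub (hγ : 0 ≤ γ) :
    AntitoneOn (fun v ↦ profileReaction γ A s vl v - (-s / A) ^ 2 * v) (Set.Ioi 0) := by
  intro u hu v hv huv
  have hform : ∀ x, profileReaction γ A s vl x - (-s / A) ^ 2 * x =
      (pP γ x - pP γ vl - s ^ 2 * vl) / A ^ 2 := fun x ↦ by rw [profileReaction]; ring
  simp only [hform]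
  gcongr
  exact antitoneOn_pP hγ hu hv huv

theorem neg_sq_le_deriv_profileReaction (hγ : 0 ≤ γ) (hu : 0 < u) (huv : u ≤ v) :
    -(-lam1 γ u / A) ^ 2 ≤ (s ^ 2 - γ * v ^ (-γ - 1)) / A ^ 2 := by
  have hpow : v ^ (-γ - 1) ≤ u ^ (-γ - 1) := rpow_le_rpow_of_nonpos hu huv (by linarith)
  rw [div_pow, neg_sq, lam1_sq hγ hu.le, ← neg_div]
  gcongr
  linarith [sq_nonneg s, mul_le_mul_of_nonneg_left hpow hγ]

theorem neg_sq_mul_sub_le_profileReaction_sub {lo : ℝ} (hγ : 0 ≤ γ) (hlo : 0 < lo) (hu : lo ≤ u)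
    (huv : u ≤ v) : -(-lam1 γ lo / A) ^ 2 * (v - u) ≤
      profileReaction γ A s vl v - profileReaction γ A s vl u := by
  have hd : ∀ x ∈ Set.Ici lo, HasDerivAt (profileReaction γ A s vl)
      ((s ^ 2 - γ * x ^ (-γ - 1)) / A ^ 2) x := fun x hx ↦
    hasDerivAt_profileReaction (hlo.trans_le hx)
  refine (convex_Ici lo).mul_sub_le_image_sub_of_le_deriv
    (fun x hx ↦ (hd x hx).continuousAt.continuousWithinAt)
    (fun x hx ↦ (hd x (interior_subset hx)).differentiableAt.differentiableWithinAt)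
    (fun x hx ↦ ?_) u hu v (hu.trans huv) huv
  rw [(hd x (interior_subset hx)).deriv]
  exact neg_sq_le_deriv_profileReaction hγ hlo (interior_subset hx)

theorem strongConvexOn_profileReaction {S : Set ℝ} {hi : ℝ} (hγ : 0 ≤ γ) (hS : Convex ℝ S)
    (hsub : S ⊆ Set.Ioc 0 hi) :
    StrongConvexOn S (γ * (γ + 1) * hi ^ (-γ - 2) / A ^ 2) (profileReaction γ A s vl) := by
  refine strongConvexOn_of_le_hasDerivAt2 (f'' := fun x ↦ γ * (γ + 1) * x ^ (-γ - 2) / A ^ 2) hS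
    (fun x hx ↦ hasDerivAt_profileReaction (hsub hx).1) (fun x hx ↦ ?_) (fun x hx ↦ ?_)
  · refine (((hasDerivAt_rpow_const (Or.inl (hsub hx).1.ne')).const_mul γ).const_sub
      (s ^ 2)).div_const (A ^ 2) |>.congr_deriv ?_
    rw [show -γ - 1 - 1 = -γ - 2 by ring]
    ring
  · have hpow : hi ^ (-γ - 2) ≤ x ^ (-γ - 2) :=
      rpow_le_rpow_of_nonpos (hsub hx).1 (hsub hx).2 (by linarith)
    gcongr

end ProfileReaction

/-- The rate `k` of the logistic inequality `V' ≤ -k (vl - V) (V - vr)` satisfied by 1-shock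
profiles with specific volumes in `[lo, hi]`. With `Λ = -lam1 γ lo` the largest characteristic
speed and `m = γ (γ + 1) hi ^ (-γ - 2)` the minimum of the second derivative of the pressure on
that range, it is the product of half the convexity modulus `m / A²` of `profileReaction` and the
factor `A / (3Λ)` comparing the latter with `V'`, made independent of the shock speed by
`A = a² - s² ≤ a²`. -/
noncomputable def logisticRate (γ a lo hi : ℝ) : ℝ :=
  γ * (γ + 1) * hi ^ (-γ - 2) / (6 * -lam1 γ lo * a ^ 2)

theorem logisticRate_pos {γ a lo hi : ℝ} (hγ : 0 < γ) (ha : a ≠ 0) (hlo : 0 < lo) (hhi : 0 < hi) :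
    0 < logisticRate γ a lo hi := by
  have hΛ : 0 < -lam1 γ lo := neg_pos.2 (lam1_neg hγ hlo)
  unfold logisticRate
  positivity

namespace IsProfile

variable {γ a s : ℝ} {Ul Ur Ue : ℝ × ℝ} {U : ℝ → ℝ × ℝ}

theorem hasDerivAt (h : IsProfile γ a s Ul Ur U) (ξ : ℝ) : HasDerivAt U (deriv U ξ) ξ :=
  (h.1.differentiable two_ne_zero ξ).hasDerivAt

theorem hasDerivAt_deriv (h : IsProfile γ a s Ul Ur U) (ξ : ℝ) :
    HasDerivAt (deriv U) (deriv (deriv U) ξ) ξ :=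
  (h.1.differentiable_deriv_two ξ).hasDerivAt

theorem hasDerivAt_fst (h : IsProfile γ a s Ul Ur U) (ξ : ℝ) :
    HasDerivAt (fun t ↦ (U t).1) (deriv U ξ).1 ξ :=
  (ContinuousLinearMap.fst ℝ ℝ ℝ).hasFDerivAt.comp_hasDerivAt ξ (h.hasDerivAt ξ)

theorem hasDerivAt_snd (h : IsProfile γ a s Ul Ur U) (ξ : ℝ) :
    HasDerivAt (fun t ↦ (U t).2) (deriv U ξ).2 ξ :=
  (ContinuousLinearMap.snd ℝ ℝ ℝ).hasFDerivAt.comp_hasDerivAt ξ (h.hasDerivAt ξ)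

theorem hasDerivAt_deriv_fst (h : IsProfile γ a s Ul Ur U) (ξ : ℝ) :
    HasDerivAt (fun t ↦ (deriv U t).1) (deriv (deriv U) ξ).1 ξ :=
  (ContinuousLinearMap.fst ℝ ℝ ℝ).hasFDerivAt.comp_hasDerivAt ξ (h.hasDerivAt_deriv ξ)

theorem hasDerivAt_Fl_comp (h : IsProfile γ a s Ul Ur U) (ξ : ℝ) :
    HasDerivAt (Fl γ ∘ U) (deriv (Fl γ ∘ U) ξ) ξ :=
  ((differentiableAt_Fl (h.2.1 ξ)).comp ξ (h.hasDerivAt ξ).differentiableAt).hasDerivAt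

theorem smul_deriv_eq_of_tendsto (h : IsProfile γ a s Ul Ur U) {l : Filter ℝ} [l.NeBot]
    (hUe : 0 < Ue.1) (hU : Tendsto U l (𝓝 Ue)) (hU' : Tendsto (deriv U) l (𝓝 0)) (ξ : ℝ) :
    (a ^ 2 - s ^ 2) • deriv U ξ = Fl γ (U ξ) - Fl γ Ue - s • (U ξ - Ue) := by
  obtain ⟨-, -, -, hode, -⟩ := id h
  let Φ : ℝ → ℝ × ℝ := fun t ↦ (a ^ 2 - s ^ 2) • deriv U t + s • U t - Fl γ (U t)
  have hΦ : ∀ t, HasDerivAt Φ 0 t := fun t ↦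
    ((((h.hasDerivAt_deriv t).const_smul (a ^ 2 - s ^ 2)).add
      ((h.hasDerivAt t).const_smul s)).sub (h.hasDerivAt_Fl_comp t)).congr_deriv
      (by rw [hode t]; module)
  have hconst : ∀ t, Φ ξ = Φ t := fun t ↦
    is_const_of_deriv_eq_zero (fun t ↦ (hΦ t).differentiableAt) (fun t ↦ (hΦ t).deriv) ξ t
  have hlim : Tendsto Φ l (𝓝 ((a ^ 2 - s ^ 2) • (0 : ℝ × ℝ) + s • Ue - Fl γ Ue)) :=
    ((hU'.const_smul (a ^ 2 - s ^ 2)).add (hU.const_smul s)).sub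
      ((differentiableAt_Fl hUe).continuousAt.tendsto.comp hU)
  have hΦξ : Φ ξ = (a ^ 2 - s ^ 2) • (0 : ℝ × ℝ) + s • Ue - Fl γ Ue :=
    tendsto_nhds_unique (tendsto_const_nhds.congr hconst) hlim
  linear_combination (norm := module) hΦξ

theorem smul_deriv_eq_left (h : IsProfile γ a s Ul Ur U) (hl : 0 < Ul.1) (ξ : ℝ) :
    (a ^ 2 - s ^ 2) • deriv U ξ = Fl γ (U ξ) - Fl γ Ul - s • (U ξ - Ul) :=
  let ⟨_, _, _, _, hU, _, hU', _⟩ := h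
  h.smul_deriv_eq_of_tendsto hl hU hU' ξ

theorem smul_deriv_eq_right (h : IsProfile γ a s Ul Ur U) (hr : 0 < Ur.1) (ξ : ℝ) :
    (a ^ 2 - s ^ 2) • deriv U ξ = Fl γ (U ξ) - Fl γ Ur - s • (U ξ - Ur) :=
  let ⟨_, _, _, _, _, hU, _, hU'⟩ := h
  h.smul_deriv_eq_of_tendsto hr hU hU' ξ

theorem rankine_hugoniot (h : IsProfile γ a s Ul Ur U) (hl : 0 < Ul.1) (hr : 0 < Ur.1) :
    s • (Ur - Ul) = Fl γ Ur - Fl γ Ul := by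
  have heq := (h.smul_deriv_eq_left hl 0).symm.trans (h.smul_deriv_eq_right hr 0)
  linear_combination (norm := module) -heq

theorem snd_sub_left (h : IsProfile γ a s Ul Ur U) (hl : 0 < Ul.1) (ξ : ℝ) :
    (U ξ).2 - Ul.2 = (a ^ 2 - s ^ 2) * -(deriv U ξ).1 - s * ((U ξ).1 - Ul.1) := by
  have hfst := congrArg Prod.fst (h.smul_deriv_eq_left hl ξ)
  simp only [Fl, Prod.smul_fst, Prod.fst_sub, smul_eq_mul] at hfst
  linarith

theorem snd_sub_right (h : IsProfile γ a s Ul Ur U) (hr : 0 < Ur.1) (ξ : ℝ) :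
    (U ξ).2 - Ur.2 = (a ^ 2 - s ^ 2) * -(deriv U ξ).1 - s * ((U ξ).1 - Ur.1) := by
  have hfst := congrArg Prod.fst (h.smul_deriv_eq_right hr ξ)
  simp only [Fl, Prod.smul_fst, Prod.fst_sub, smul_eq_mul] at hfst
  linarith

theorem right_snd_sub_left_snd (h : IsProfile γ a s Ul Ur U) (hl : 0 < Ul.1) (hr : 0 < Ur.1) :
    Ur.2 - Ul.2 = -s * (Ur.1 - Ul.1) := by
  have hfst := congrArg Prod.fst (h.rankine_hugoniot hl hr)
  simp only [Fl, Prod.smul_fst, Prod.fst_sub, smul_eq_mul] at hfst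
  linarith

theorem profileReaction_right (h : IsProfile γ a s Ul Ur U) (hl : 0 < Ul.1) (hr : 0 < Ur.1)
    (A : ℝ) : profileReaction γ A s Ul.1 Ur.1 = 0 := by
  have hsnd := congrArg Prod.snd (h.rankine_hugoniot hl hr)
  simp only [Fl, Prod.smul_snd, Prod.snd_sub, smul_eq_mul] at hsnd
  rw [profileReaction, div_eq_zero_iff]
  left
  linear_combination s * h.right_snd_sub_left_snd hl hr - hsnd

theorem deriv_deriv_fst (h : IsProfile γ a s Ul Ur U) (hl : 0 < Ul.1) (hA : a ^ 2 - s ^ 2 ≠ 0)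
    (ξ : ℝ) : -(deriv (deriv U) ξ).1 = 2 * (-s / (a ^ 2 - s ^ 2)) * -(deriv U ξ).1 +
      profileReaction γ (a ^ 2 - s ^ 2) s Ul.1 (U ξ).1 := by
  have hderiv_snd : (deriv U ξ).2 =
      (a ^ 2 - s ^ 2) * -(deriv (deriv U) ξ).1 - s * (deriv U ξ).1 := by
    refine ((h.hasDerivAt_snd ξ).sub_const Ul.2).unique ?_
    simp only [h.snd_sub_left hl]
    exact ((h.hasDerivAt_deriv_fst ξ).neg.const_mul _).sub
      (((h.hasDerivAt_fst ξ).sub_const Ul.1).const_mul s)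
  have hsnd := congrArg Prod.snd (h.smul_deriv_eq_left hl ξ)
  simp only [Fl, Prod.smul_snd, Prod.snd_sub, smul_eq_mul] at hsnd
  rw [hderiv_snd, h.snd_sub_left hl ξ] at hsnd
  rw [profileReaction]
  field_simp
  linear_combination hsnd

theorem isConnectingOrbit (h : IsProfile γ a s Ul Ur U) (hl : 0 < Ul.1)
    (hA : a ^ 2 - s ^ 2 ≠ 0) :
    IsConnectingOrbit (-s / (a ^ 2 - s ^ 2)) (profileReaction γ (a ^ 2 - s ^ 2) s Ul.1)
      Ul.1 Ur.1 (fun ξ ↦ (U ξ).1) (fun ξ ↦ -(deriv U ξ).1) := by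
  obtain ⟨-, -, -, -, hbot, htop, -, htop'⟩ := id h
  exact
    { hasDerivAt := fun ξ ↦ (h.hasDerivAt_fst ξ).congr_deriv (neg_neg _).symm
      hasDerivAt_speed := fun ξ ↦
        (h.hasDerivAt_deriv_fst ξ).neg.congr_deriv (h.deriv_deriv_fst hl hA ξ)
      tendsto_atBot := hbot.fst_nhds
      tendsto_atTop := htop.fst_nhds
      tendsto_speed_atTop := by simpa using htop'.fst_nhds.neg }

end IsProfile

/-- A relaxation profile of a 1-shock: the speed satisfies the Lax condition and `s² < a²`, and the
specific volumes of both end states lie in the fixed range `[lo, hi]` on which the constants of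
the decay estimates depend. -/
structure IsOneShockProfile (γ a s lo hi : ℝ) (Ul Ur : ℝ × ℝ) (U : ℝ → ℝ × ℝ) : Prop where
  isProfile : IsProfile γ a s Ul Ur U
  gamma_pos : 0 < γ
  lo_pos : 0 < lo
  left_mem : Ul.1 ∈ Set.Icc lo hi
  right_mem : Ur.1 ∈ Set.Icc lo hi
  lam1_right_lt : lam1 γ Ur.1 < s
  lt_lam1_left : s < lam1 γ Ul.1
  sq_lt_sq : s ^ 2 < a ^ 2

namespace IsOneShockProfile

variable {γ a s lo hi : ℝ} {Ul Ur : ℝ × ℝ} {U : ℝ → ℝ × ℝ}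

theorem left_pos (h : IsOneShockProfile γ a s lo hi Ul Ur U) : 0 < Ul.1 :=
  h.lo_pos.trans_le h.left_mem.1

theorem right_pos (h : IsOneShockProfile γ a s lo hi Ul Ur U) : 0 < Ur.1 :=
  h.lo_pos.trans_le h.right_mem.1

theorem right_lt_left (h : IsOneShockProfile γ a s lo hi Ul Ur U) : Ur.1 < Ul.1 :=
  (monotoneOn_lam1 h.gamma_pos.le).reflect_lt h.right_pos h.left_pos
    (h.lam1_right_lt.trans h.lt_lam1_left)

theorem speed_neg (h : IsOneShockProfile γ a s lo hi Ul Ur U) : s < 0 :=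
  h.lt_lam1_left.trans (lam1_neg h.gamma_pos h.left_pos)

theorem neg_speed_le (h : IsOneShockProfile γ a s lo hi Ul Ur U) : -s ≤ -lam1 γ lo :=
  neg_le_neg ((monotoneOn_lam1 h.gamma_pos.le h.lo_pos h.right_pos h.right_mem.1).trans
    h.lam1_right_lt.le)

theorem viscosity_pos (h : IsOneShockProfile γ a s lo hi Ul Ur U) : 0 < a ^ 2 - s ^ 2 :=
  sub_pos.2 h.sq_lt_sq

theorem damping_pos (h : IsOneShockProfile γ a s lo hi Ul Ur U) : 0 < -s / (a ^ 2 - s ^ 2) :=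
  div_pos (neg_pos.2 h.speed_neg) h.viscosity_pos

theorem isConnectingOrbit (h : IsOneShockProfile γ a s lo hi Ul Ur U) :
    IsConnectingOrbit (-s / (a ^ 2 - s ^ 2)) (profileReaction γ (a ^ 2 - s ^ 2) s Ul.1)
      Ul.1 Ur.1 (fun ξ ↦ (U ξ).1) (fun ξ ↦ -(deriv U ξ).1) :=
  h.isProfile.isConnectingOrbit h.left_pos h.viscosity_pos.ne'

theorem fst_mem_Icc (h : IsOneShockProfile γ a s lo hi Ul Ur U) (ξ : ℝ) :
    (U ξ).1 ∈ Set.Icc Ur.1 Ul.1 :=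
  h.isConnectingOrbit.mem_Icc h.damping_pos h.right_lt_left
    (antitoneOn_profileReaction_sub h.gamma_pos.le) h.isProfile.2.1 h.left_pos h.right_pos
    profileReaction_self (h.isProfile.profileReaction_right h.left_pos h.right_pos _) ξ

theorem profileReaction_fst_le (h : IsOneShockProfile γ a s lo hi Ul Ur U) (ξ : ℝ) :
    profileReaction γ (a ^ 2 - s ^ 2) s Ul.1 (U ξ).1 ≤
      -(γ * (γ + 1) * hi ^ (-γ - 2) / (a ^ 2 - s ^ 2) ^ 2 / 2 *
        ((Ul.1 - (U ξ).1) * ((U ξ).1 - Ur.1))) :=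
  le_neg_mul_of_strongConvexOn_of_eq_zero h.right_lt_left
    (strongConvexOn_profileReaction h.gamma_pos.le (convex_Icc _ _)
      fun _ hv ↦ ⟨h.right_pos.trans_le hv.1, hv.2.trans h.left_mem.2⟩)
    (h.isProfile.profileReaction_right h.left_pos h.right_pos _) profileReaction_self
    (h.fst_mem_Icc ξ)

theorem profileReaction_fst_nonpos (h : IsOneShockProfile γ a s lo hi Ul Ur U) (ξ : ℝ) :
    profileReaction γ (a ^ 2 - s ^ 2) s Ul.1 (U ξ).1 ≤ 0 := by
  have hγ := h.gamma_pos
  have hhi : 0 < hi := h.left_pos.trans_le h.left_mem.2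
  have hl := sub_nonneg.2 (h.fst_mem_Icc ξ).2
  have hr := sub_nonneg.2 (h.fst_mem_Icc ξ).1
  exact (h.profileReaction_fst_le ξ).trans (neg_nonpos.2 (by positivity))

theorem neg_deriv_fst_nonneg (h : IsOneShockProfile γ a s lo hi Ul Ur U) (ξ : ℝ) :
    0 ≤ -(deriv U ξ).1 :=
  h.isConnectingOrbit.speed_nonneg h.damping_pos h.profileReaction_fst_nonpos ξ

theorem viscosity_mul_neg_deriv_fst_le_left (h : IsOneShockProfile γ a s lo hi Ul Ur U)
    (ξ : ℝ) : (a ^ 2 - s ^ 2) * -(deriv U ξ).1 ≤ -s * (Ul.1 - (U ξ).1) := by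
  have hbound := h.isConnectingOrbit.speed_le_mul_sub_left h.damping_pos (fun t ↦ by
    have hanti := antitoneOn_profileReaction_sub (A := a ^ 2 - s ^ 2) (s := s) (vl := Ul.1)
      h.gamma_pos.le (h.isProfile.2.1 t) h.left_pos (h.fst_mem_Icc t).2
    simp only [profileReaction_self] at hanti
    linarith) ξ
  rwa [div_mul_eq_mul_div, le_div_iff₀' h.viscosity_pos] at hbound

theorem viscosity_mul_neg_deriv_fst_le_right (h : IsOneShockProfile γ a s lo hi Ul Ur U)
    (ξ : ℝ) : (a ^ 2 - s ^ 2) * -(deriv U ξ).1 ≤ -lam1 γ lo * ((U ξ).1 - Ur.1) := by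
  have hL : 0 < -lam1 γ lo / (a ^ 2 - s ^ 2) :=
    div_pos (neg_pos.2 (lam1_neg h.gamma_pos h.lo_pos)) h.viscosity_pos
  have hbound := h.isConnectingOrbit.speed_le_mul_sub_right h.damping_pos.le hL
    h.neg_deriv_fst_nonneg (fun t ↦ by
      have hmvt := neg_sq_mul_sub_le_profileReaction_sub (A := a ^ 2 - s ^ 2) (s := s)
        (vl := Ul.1) h.gamma_pos.le h.lo_pos h.right_mem.1 (h.fst_mem_Icc t).1
      rw [h.isProfile.profileReaction_right h.left_pos h.right_pos, sub_zero] at hmvt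
      linarith) ξ
  rwa [div_mul_eq_mul_div, le_div_iff₀' h.viscosity_pos] at hbound

-- `κ = A / (3Λ)` with `Λ = -lam1 γ lo` satisfies the smallness condition of `mul_neg_le_speed`,
-- because `-s ≤ Λ`.
theorem mul_neg_profileReaction_le (h : IsOneShockProfile γ a s lo hi Ul Ur U) (ξ : ℝ) :
    (a ^ 2 - s ^ 2) / (3 * -lam1 γ lo) *
      -profileReaction γ (a ^ 2 - s ^ 2) s Ul.1 (U ξ).1 ≤ -(deriv U ξ).1 := by
  have hA := h.viscosity_pos
  have hΛ : 0 < -lam1 γ lo := neg_pos.2 (lam1_neg h.gamma_pos h.lo_pos)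
  have hlo : ∀ t, lo ≤ (U t).1 := fun t ↦ h.right_mem.1.trans (h.fst_mem_Icc t).1
  have hsmall : (a ^ 2 - s ^ 2) / (3 * -lam1 γ lo) * (2 * (-s / (a ^ 2 - s ^ 2)) +
      (a ^ 2 - s ^ 2) / (3 * -lam1 γ lo) * (-lam1 γ lo / (a ^ 2 - s ^ 2)) ^ 2) ≤ 1 := by
    have hs := h.neg_speed_le
    generalize -lam1 γ lo = Λ at hΛ hs ⊢
    field_simp
    linarith
  exact h.isConnectingOrbit.mul_neg_le_speed
    (f' := fun v ↦ (s ^ 2 - γ * v ^ (-γ - 1)) / (a ^ 2 - s ^ 2) ^ 2) h.damping_pos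
    (by positivity) hsmall h.neg_deriv_fst_nonneg h.profileReaction_fst_nonpos
    (fun t ↦ hasDerivAt_profileReaction (h.isProfile.2.1 t))
    (fun t ↦ neg_sq_le_deriv_profileReaction h.gamma_pos.le h.lo_pos (hlo t))
    (hasDerivAt_profileReaction h.right_pos).continuousAt ξ

theorem norm_sub_left_le (h : IsOneShockProfile γ a s lo hi Ul Ur U) (ξ : ℝ) :
    ‖U ξ - Ul‖ ≤ (1 + 2 * -lam1 γ lo) * (Ul.1 - (U ξ).1) := by
  have hdist : 0 ≤ Ul.1 - (U ξ).1 := sub_nonneg.2 (h.fst_mem_Icc ξ).2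
  have hslope := mul_nonneg h.viscosity_pos.le (h.neg_deriv_fst_nonneg ξ)
  have hslope_le := h.viscosity_mul_neg_deriv_fst_le_left ξ
  have hspeed := mul_le_mul_of_nonneg_right h.neg_speed_le hdist
  rw [Prod.norm_def, Prod.fst_sub, Prod.snd_sub, h.isProfile.snd_sub_left h.left_pos]
  refine max_le (abs_le.2 ⟨?_, ?_⟩) (abs_le.2 ⟨?_, ?_⟩) <;> linarith

theorem norm_sub_right_le (h : IsOneShockProfile γ a s lo hi Ul Ur U) (ξ : ℝ) :
    ‖U ξ - Ur‖ ≤ (1 + 2 * -lam1 γ lo) * ((U ξ).1 - Ur.1) := by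
  have hdist : 0 ≤ (U ξ).1 - Ur.1 := sub_nonneg.2 (h.fst_mem_Icc ξ).1
  have hslope := mul_nonneg h.viscosity_pos.le (h.neg_deriv_fst_nonneg ξ)
  have hslope_le := h.viscosity_mul_neg_deriv_fst_le_right ξ
  have hspeed := mul_le_mul_of_nonneg_right h.neg_speed_le hdist
  have hspeed_nonneg := mul_nonneg (neg_nonneg.2 h.speed_neg.le) hdist
  rw [Prod.norm_def, Prod.fst_sub, Prod.snd_sub, h.isProfile.snd_sub_right h.right_pos]
  refine max_le (abs_le.2 ⟨?_, ?_⟩) (abs_le.2 ⟨?_, ?_⟩) <;> linarith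

theorem norm_sub_le (h : IsOneShockProfile γ a s lo hi Ul Ur U) :
    ‖Ur - Ul‖ ≤ (1 + -lam1 γ lo) * (Ul.1 - Ur.1) := by
  have hdist : 0 ≤ Ul.1 - Ur.1 := sub_nonneg.2 h.right_lt_left.le
  have hspeed := mul_le_mul_of_nonneg_right h.neg_speed_le hdist
  have hspeed_nonneg := mul_nonneg (neg_nonneg.2 h.speed_neg.le) hdist
  rw [Prod.norm_def, Prod.fst_sub, Prod.snd_sub,
    h.isProfile.right_snd_sub_left_snd h.left_pos h.right_pos]
  refine max_le (abs_le.2 ⟨?_, ?_⟩) (abs_le.2 ⟨?_, ?_⟩) <;> linarith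

theorem fst_sub_fst_le_norm (h : IsOneShockProfile γ a s lo hi Ul Ur U) :
    Ul.1 - Ur.1 ≤ ‖Ur - Ul‖ := calc
  Ul.1 - Ur.1 = ‖(Ur - Ul).1‖ := by
    rw [Prod.fst_sub, norm_eq_abs, abs_sub_comm, abs_of_pos (sub_pos.2 h.right_lt_left)]
  _ ≤ ‖Ur - Ul‖ := norm_fst_le _

theorem rate_pos (h : IsOneShockProfile γ a s lo hi Ul Ur U) :
    0 < logisticRate γ a lo hi :=
  logisticRate_pos h.gamma_pos (sq_pos_iff.1 ((sq_nonneg s).trans_lt h.sq_lt_sq)) h.lo_pos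
    (h.left_pos.trans_le h.left_mem.2)

theorem mul_norm_sub_le_rate_mul (h : IsOneShockProfile γ a s lo hi Ul Ur U) :
    logisticRate γ a lo hi / (2 * (1 + -lam1 γ lo)) * ‖Ur - Ul‖ ≤
      logisticRate γ a lo hi * ((Ul.1 - Ur.1) / 2) := by
  have hΛ : 0 < -lam1 γ lo := neg_pos.2 (lam1_neg h.gamma_pos h.lo_pos)
  have hk := h.rate_pos
  rw [div_mul_eq_mul_div, div_le_iff₀ (by positivity)]
  linarith [mul_le_mul_of_nonneg_left h.norm_sub_le hk.le]

theorem deriv_fst_le_logistic (h : IsOneShockProfile γ a s lo hi Ul Ur U) (ξ : ℝ) :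
    (deriv U ξ).1 ≤ -(logisticRate γ a lo hi * ((Ul.1 - (U ξ).1) * ((U ξ).1 - Ur.1))) := by
  have hγ := h.gamma_pos
  have hhi : 0 < hi := h.left_pos.trans_le h.left_mem.2
  have hΛ : 0 < -lam1 γ lo := neg_pos.2 (lam1_neg h.gamma_pos h.lo_pos)
  have hA := h.viscosity_pos
  have hl : 0 ≤ Ul.1 - (U ξ).1 := sub_nonneg.2 (h.fst_mem_Icc ξ).2
  have hr : 0 ≤ (U ξ).1 - Ur.1 := sub_nonneg.2 (h.fst_mem_Icc ξ).1
  suffices hspeed : logisticRate γ a lo hi * ((Ul.1 - (U ξ).1) * ((U ξ).1 - Ur.1)) ≤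
      -(deriv U ξ).1 by linarith
  calc
    _ ≤ γ * (γ + 1) * hi ^ (-γ - 2) / (6 * -lam1 γ lo * (a ^ 2 - s ^ 2)) *
          ((Ul.1 - (U ξ).1) * ((U ξ).1 - Ur.1)) := by
        unfold logisticRate
        gcongr
        exact sub_le_self _ (sq_nonneg s)
    _ = (a ^ 2 - s ^ 2) / (3 * -lam1 γ lo) *
          (γ * (γ + 1) * hi ^ (-γ - 2) / (a ^ 2 - s ^ 2) ^ 2 / 2 *
            ((Ul.1 - (U ξ).1) * ((U ξ).1 - Ur.1))) := by
        field_simp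
        ring
    _ ≤ (a ^ 2 - s ^ 2) / (3 * -lam1 γ lo) *
          -profileReaction γ (a ^ 2 - s ^ 2) s Ul.1 (U ξ).1 := by
        gcongr
        exact le_neg_of_le_neg (h.profileReaction_fst_le ξ)
    _ ≤ -(deriv U ξ).1 := h.mul_neg_profileReaction_le ξ

theorem norm_sub_left_le_exp (h : IsOneShockProfile γ a s lo hi Ul Ur U)
    (hmid : (U 0).1 = (Ul.1 + Ur.1) / 2) {ξ : ℝ} (hξ : ξ ≤ 0) :
    ‖U ξ - Ul‖ ≤ (1 + 2 * -lam1 γ lo) * ‖Ur - Ul‖ *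
      exp (-(logisticRate γ a lo hi / (2 * (1 + -lam1 γ lo)) * ‖Ur - Ul‖ * |ξ|)) := by
  have hΛ : 0 < -lam1 γ lo := neg_pos.2 (lam1_neg h.gamma_pos h.lo_pos)
  have hamplitude : Ul.1 - (U 0).1 ≤ ‖Ur - Ul‖ := by
    linarith [h.fst_sub_fst_le_norm, h.right_lt_left]
  have hrate : logisticRate γ a lo hi / (2 * (1 + -lam1 γ lo)) * ‖Ur - Ul‖ ≤
      logisticRate γ a lo hi * ((U 0).1 - Ur.1) := by
    refine h.mul_norm_sub_le_rate_mul.trans_eq ?_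
    rw [hmid]
    ring
  calc
    ‖U ξ - Ul‖ ≤ (1 + 2 * -lam1 γ lo) * (Ul.1 - (U ξ).1) := h.norm_sub_left_le ξ
    _ ≤ (1 + 2 * -lam1 γ lo) *
          ((Ul.1 - (U 0).1) * exp (logisticRate γ a lo hi * ((U 0).1 - Ur.1) * ξ)) := by
        gcongr
        exact sub_le_mul_exp_of_logistic_of_nonpos h.isProfile.hasDerivAt_fst h.fst_mem_Icc
          h.rate_pos.le h.deriv_fst_le_logistic hξ
    _ ≤ _ := by
        rw [mul_assoc _ ‖Ur - Ul‖, abs_of_nonpos hξ, mul_neg _ ξ, neg_neg]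
        gcongr _ * (?_ * exp ?_)
        exact mul_le_mul_of_nonpos_right hrate hξ

theorem norm_sub_right_le_exp (h : IsOneShockProfile γ a s lo hi Ul Ur U)
    (hmid : (U 0).1 = (Ul.1 + Ur.1) / 2) {ξ : ℝ} (hξ : 0 ≤ ξ) :
    ‖U ξ - Ur‖ ≤ (1 + 2 * -lam1 γ lo) * ‖Ur - Ul‖ *
      exp (-(logisticRate γ a lo hi / (2 * (1 + -lam1 γ lo)) * ‖Ur - Ul‖ * |ξ|)) := by
  have hΛ : 0 < -lam1 γ lo := neg_pos.2 (lam1_neg h.gamma_pos h.lo_pos)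
  have hamplitude : (U 0).1 - Ur.1 ≤ ‖Ur - Ul‖ := by
    linarith [h.fst_sub_fst_le_norm, h.right_lt_left]
  have hrate : logisticRate γ a lo hi / (2 * (1 + -lam1 γ lo)) * ‖Ur - Ul‖ ≤
      logisticRate γ a lo hi * (Ul.1 - (U 0).1) := by
    refine h.mul_norm_sub_le_rate_mul.trans_eq ?_
    rw [hmid]
    ring
  calc
    ‖U ξ - Ur‖ ≤ (1 + 2 * -lam1 γ lo) * ((U ξ).1 - Ur.1) := h.norm_sub_right_le ξ
    _ ≤ (1 + 2 * -lam1 γ lo) *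
          (((U 0).1 - Ur.1) * exp (-(logisticRate γ a lo hi * (Ul.1 - (U 0).1) * ξ))) := by
        gcongr
        exact sub_le_mul_exp_of_logistic h.isProfile.hasDerivAt_fst h.fst_mem_Icc
          h.rate_pos.le h.deriv_fst_le_logistic hξ
    _ ≤ _ := by
        rw [mul_assoc _ ‖Ur - Ul‖, abs_of_nonneg hξ]
        gcongr

end IsOneShockProfile

theorem sq_lt_sq_of_lam1_lt {γ a s v : ℝ} (hlam : lam1 γ v < s) (hs : s ≤ 0)
    (hsub : √(γ * v ^ (-γ - 1)) < a) : s ^ 2 < a ^ 2 :=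
  sq_lt_sq' ((neg_lt_neg hsub).trans hlam) (hs.trans_lt ((sqrt_nonneg _).trans_lt hsub))

theorem relaxation_shock_exponential_decay_general {γ a lo hi : ℝ} (hγ : 0 < γ) (ha : a ≠ 0)
    (hlo : 0 < lo) (hhi : 0 < hi) :
    ∃ C c₀ : ℝ, 0 < C ∧ 0 < c₀ ∧ ∀ (s : ℝ) (Ul Ur : ℝ × ℝ) (U : ℝ → ℝ × ℝ),
      IsOneShockProfile γ a s lo hi Ul Ur U → (U 0).1 = (Ul.1 + Ur.1) / 2 →
        (∀ ξ ≤ 0, ‖U ξ - Ul‖ ≤ C * ‖Ur - Ul‖ * exp (-(c₀ * ‖Ur - Ul‖ * |ξ|))) ∧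
        (∀ ξ, 0 ≤ ξ → ‖U ξ - Ur‖ ≤ C * ‖Ur - Ul‖ * exp (-(c₀ * ‖Ur - Ul‖ * |ξ|))) := by
  have hΛ : 0 < -lam1 γ lo := neg_pos.2 (lam1_neg hγ hlo)
  have hrate := logisticRate_pos hγ ha hlo hhi
  exact ⟨1 + 2 * -lam1 γ lo, logisticRate γ a lo hi / (2 * (1 + -lam1 γ lo)), by positivity,
    by positivity, fun _ _ _ _ h hmid ↦
      ⟨fun _ hξ ↦ h.norm_sub_left_le_exp hmid hξ, fun _ hξ ↦ h.norm_sub_right_le_exp hmid hξ⟩⟩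

/-- exponential decay of the 1-relaxation shock profile towards its
end states, with rate proportional to the wave strength `δ₁`.  The constants
`δ₀, C, c₀` depend only on `γ`, `a` and the fixed base state `vbar`. -/
theorem relaxation_shock_exponential_decay
    (γ a vbar : ℝ) (hγ : 1 < γ) (ha : 0 < a) (hvbar : 0 < vbar) :
    ∃ δ₀ C c₀ : ℝ, 0 < δ₀ ∧ 0 < C ∧ 0 < c₀ ∧
      ∀ (vs us vp up s₁ : ℝ) (US1 : ℝ → ℝ × ℝ),
        vs ∈ Set.Icc (vbar / 2) (2 * vbar) → vp ∈ Set.Icc (vbar / 2) (2 * vbar) →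
        lam1 γ vp < s₁ → s₁ < lam1 γ vs → lam1 γ vs < 0 →
        (∀ v ∈ Set.uIcc vs vp, Real.sqrt (γ * v ^ (-γ - 1)) < a) →
        IsProfile γ a s₁ (vs, us) (vp, up) US1 →
        (US1 0).1 = (vs + vp) / 2 →
        ‖((vp, up) : ℝ × ℝ) - (vs, us)‖ ≤ δ₀ →
        (∀ ξ : ℝ, ξ ≤ 0 →
            ‖US1 ξ - (vs, us)‖ ≤
              C * ‖((vp, up) : ℝ × ℝ) - (vs, us)‖ *
                Real.exp (-(c₀ * ‖((vp, up) : ℝ × ℝ) - (vs, us)‖ * |ξ|))) ∧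
        (∀ ξ : ℝ, 0 ≤ ξ →
            ‖US1 ξ - (vp, up)‖ ≤
              C * ‖((vp, up) : ℝ × ℝ) - (vs, us)‖ *
                Real.exp (-(c₀ * ‖((vp, up) : ℝ × ℝ) - (vs, us)‖ * |ξ|))) := by
  obtain ⟨C, c₀, hC, hc₀, hdecay⟩ := relaxation_shock_exponential_decay_general (γ := γ)
    (by linarith) ha.ne' (half_pos hvbar) (mul_pos two_pos hvbar)
  exact ⟨1, C, c₀, one_pos, hC, hc₀, fun vs us vp up s₁ US1 hvs hvp hr hl hneg hsub hU hmid _ ↦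
    hdecay s₁ (vs, us) (vp, up) US1 ⟨hU, by linarith, half_pos hvbar, hvs, hvp, hr, hl,
      sq_lt_sq_of_lam1_lt hr (hl.trans hneg).le (hsub vp Set.right_mem_uIcc)⟩ hmid⟩
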